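/- Let L = ℚ(ζ₇ + ζ₇⁻¹), with cyclic Galois group over ℚ generated by the automorphism S sending ζ₇ + ζ₇⁻¹ to ζ₇² + ζ₇⁻². In M₃(L) let D(z) = diag(z, S(z), S²(z)) for z ∈ L, and let U be the matrix with U_{2,1} = U_{3,2} = 1, U_{1,3} = 2, and 0 elsewhere (so U³ = 2·I and D(z)U = U·D(S(z))). Then the ℚ-subalgebra of M₃(L) generated by U together with all D(z), z ∈ L, is a division ring of dimension 9 over ℚ (a model of the cyclic division algebra L + uL + u²L with u³ = 2). -/

import Mathlib

noncomputable section

/-- `ζ₇ = e^{2πi/7}`, a primitive seventh root of unity in `ℂ`. -/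
def zeta7 : ℂ := Complex.exp (2 * Real.pi * Complex.I / 7)

/-- `L = ℚ(ζ₇ + ζ₇⁻¹)`, the real subfield of `ℚ(ζ₇)` of degree 3 over `ℚ`. -/
def L7 : IntermediateField ℚ ℂ := IntermediateField.adjoin ℚ {zeta7 + zeta7⁻¹}

/-- `η = ζ₇ + ζ₇⁻¹` as an element of `L`. -/
def eta7 : L7 := ⟨zeta7 + zeta7⁻¹, IntermediateField.subset_adjoin ℚ _ rfl⟩

/-!
Write `u` for the shift matrix and `z ↦ D z` for the diagonal embedding of `L`, so that `uⁿ = γ`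
and every element of the algebra is `∑ i, uⁱ D(aᵢ)` for unique `aᵢ ∈ L`. Suppose `L` is the fraction
field of a domain `R` stable under the automorphism, in which `γ` is prime and fixed. After clearing
denominators all `aᵢ` lie in `R`. Modulo `γ` the matrix of such an element is lower triangular, and
its diagonal entries are the conjugates of `a₀`. If its determinant vanishes, then `γ ∣ a₀`, so that
a factor `u` splits off on the left; repeating this gives `γ ∣ aᵢ` for all `i`. Now a factor
`D γ` splits off on the right, and infinite descent shows that all `aᵢ` are zero. Hence nonzero
elements have nonzero determinant.

For `R = 𝓞 L7` and `γ = 2`, the primality of `2` holds because the minimal polynomial of `eta7`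
remains irreducible modulo `2`.
-/

section CyclicMatrix

open Matrix

variable {n : ℕ} {R : Type*} [CommRing R]

/-- The matrix `diag(z, σ z, …, σⁿ⁻¹ z)` by which `z ∈ R` acts in the cyclic algebra. -/
def cyclicDiagonal (n : ℕ) (σ : R → R) (z : R) : Matrix (Fin n) (Fin n) R :=
  diagonal fun j => σ^[j] z

/-- The matrix of the generator `u` with `uⁿ = γ`: ones below the diagonal and `γ` in the upper
right corner. Addition in `Fin n` is cyclic, so the corner is the position with `i = 0`. -/
def cyclicShift (n : ℕ) [NeZero n] (γ : R) : Matrix (Fin n) (Fin n) R :=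
  of fun i j => if i = j + 1 then (if i = 0 then γ else 1) else 0

/-- The matrix of `∑ i, uⁱ aᵢ`, where `u` is `cyclicShift n γ` and `aᵢ` stands for
`cyclicDiagonal n σ (a i)`. Subtraction in `Fin n` is cyclic, and `γ` is picked up on wrapping
around. -/
def cyclicMatrix (σ : R → R) (γ : R) (a : Fin n → R) : Matrix (Fin n) (Fin n) R :=
  of fun i j => (if j ≤ i then 1 else γ) * σ^[j] (a (i - j))

/-- The coefficients of `u * ∑ i, uⁱ aᵢ` with respect to the powers of `u`. -/
def cyclicShiftCoeff [NeZero n] (γ : R) (a : Fin n → R) : Fin n → R :=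
  fun i => (if i = 0 then γ else 1) * a (i - 1)

lemma cyclicShift_mul_apply [NeZero n] (γ : R) (M : Matrix (Fin n) (Fin n) R) (i j : Fin n) :
    (cyclicShift n γ * M) i j = (if i = 0 then γ else 1) * M (i - 1) j := by
  simp [cyclicShift, mul_apply, ← sub_eq_iff_eq_add]

lemma det_cyclicShift_ne_zero [NeZero n] [IsDomain R] {γ : R} (hγ : γ ≠ 0) :
    (cyclicShift n γ).det ≠ 0 := by
  have factorization : cyclicShift n γ = diagonal (fun i => if i = 0 then γ else 1) *
      (1 : Matrix (Fin n) (Fin n) R).submatrix (Equiv.subRight 1) id := by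
    ext i j
    rw [← mul_one (cyclicShift n γ), cyclicShift_mul_apply, diagonal_mul, submatrix_apply]
    rfl
  have sign_ne_zero : ((Equiv.Perm.sign (Equiv.subRight (1 : Fin n)) : ℤ) : R) ≠ 0 :=
    ((Equiv.Perm.sign _).isUnit.map (Int.castRingHom R)).ne_zero
  rw [factorization, det_mul, det_diagonal, det_permute, det_one, mul_one, Fintype.prod_ite_eq']
  exact mul_ne_zero hγ sign_ne_zero

lemma fin_le_sub_one_iff [NeZero n] {i j : Fin n} : j ≤ i - 1 ↔ i = 0 ∨ j < i := by
  obtain ⟨m, rfl⟩ := Nat.exists_eq_succ_of_ne_zero (NeZero.ne n)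
  rcases eq_or_ne i 0 with rfl | hi
  · simp [Fin.le_def, Fin.coe_neg_one, Nat.le_of_lt_succ j.isLt]
  · have val_pos := Fin.pos_iff_ne_zero.2 hi
    simp only [hi, false_or, Fin.le_def, Fin.lt_def, Fin.val_sub_one_of_ne_zero hi] at val_pos ⊢
    lia

lemma ite_eq_zero_mul_ite_le_sub_one [NeZero n] (γ : R) (i j : Fin n) :
    (if i = 0 then γ else 1) * (if j ≤ i - 1 then 1 else γ) =
      (if j ≤ i then 1 else γ) * (if i - j = 0 then γ else 1) := by
  simp only [fin_le_sub_one_iff]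
  rcases eq_or_ne i 0 with rfl | hi
  · rcases eq_or_ne j 0 with rfl | hj
    · simp
    · simp [hj]
  · rcases lt_trichotomy j i with h | rfl | h
    · simp [hi, h, h.le, sub_eq_zero, h.ne']
    · simp [hi]
    · simp [hi, h.not_gt, h.not_ge, sub_eq_zero, h.ne]

variable {F : Type*} [FunLike F R R] [RingHomClass F R R] {σ : F} {γ : R}

lemma cyclicShift_mul_cyclicMatrix [NeZero n] (hσγ : σ γ = γ) (a : Fin n → R) :
    cyclicShift n γ * cyclicMatrix σ γ a = cyclicMatrix σ γ (cyclicShiftCoeff γ a) := by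
  ext i j
  have iterate_weight : σ^[j] (if i - j = 0 then γ else 1) = if i - j = 0 then γ else 1 := by
    split_ifs
    exacts [Function.iterate_fixed hσγ _, iterate_map_one σ _]
  simp only [cyclicShift_mul_apply, cyclicMatrix, cyclicShiftCoeff, of_apply, iterate_map_mul,
    iterate_weight, ← mul_assoc, ite_eq_zero_mul_ite_le_sub_one, sub_right_comm i 1 j]

lemma cyclicMatrix_mul_cyclicDiagonal (a : Fin n → R) (z : R) :
    cyclicMatrix σ γ a * cyclicDiagonal n σ z = cyclicMatrix σ γ fun i => a i * z := by
  ext i j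
  simp only [cyclicMatrix, cyclicDiagonal, mul_diagonal, of_apply, iterate_map_mul, mul_assoc]

lemma iterate_iterate_fin_sub {α : Type*} {f : α → α} (hf : f^[n] = id) (i j : Fin n) (x : α) :
    f^[j] (f^[(i - j : Fin n)] x) = f^[i] x := by
  rw [← Function.iterate_add_apply]
  rcases le_or_gt j i with h | h
  · rw [Fin.coe_sub_iff_le.2 h, Nat.add_sub_cancel' h]
  · have wrap : (j : ℕ) + (i - j : Fin n) = i + n := by
      rw [Fin.coe_sub_iff_lt.2 h]
      lia
    rw [wrap, Function.iterate_add_apply, hf, id]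

lemma cyclicDiagonal_mul_cyclicMatrix (hσ : σ^[n] = id) (z : R) (a : Fin n → R) :
    cyclicDiagonal n σ z * cyclicMatrix σ γ a = cyclicMatrix σ γ fun i => σ^[i] z * a i := by
  ext i j
  simp only [cyclicMatrix, cyclicDiagonal, diagonal_mul, of_apply, iterate_map_mul,
    iterate_iterate_fin_sub hσ, mul_left_comm]

lemma cyclicMatrix_single_zero [NeZero n] (z : R) :
    cyclicMatrix σ γ (Pi.single (0 : Fin n) z) = cyclicDiagonal n σ z := by
  ext i j
  rcases eq_or_ne i j with rfl | hij
  · simp [cyclicMatrix, cyclicDiagonal]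
  · simp [cyclicMatrix, cyclicDiagonal, hij, sub_eq_zero]

lemma cyclicShiftCoeff_single [NeZero n] {i : Fin n} (hi : i + 1 ≠ 0) (z : R) :
    cyclicShiftCoeff γ (Pi.single i z) = Pi.single (i + 1) z := by
  ext k
  rcases eq_or_ne k (i + 1) with rfl | hk
  · simp [cyclicShiftCoeff, hi]
  · simp [cyclicShiftCoeff, hk, sub_eq_iff_eq_add]

lemma cyclicShift_pow_mul_cyclicDiagonal [NeZero n] (hσγ : σ γ = γ) (i : Fin n) (z : R) :
    cyclicShift n γ ^ (i : ℕ) * cyclicDiagonal n σ z = cyclicMatrix σ γ (Pi.single i z) := by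
  obtain ⟨m, rfl⟩ := Nat.exists_eq_succ_of_ne_zero (NeZero.ne n)
  induction i using Fin.induction with
  | zero => simp [cyclicMatrix_single_zero]
  | succ i ih =>
    rw [Fin.val_castSucc] at ih
    rw [Fin.val_succ, pow_succ', mul_assoc, ih, cyclicShift_mul_cyclicMatrix hσγ,
      cyclicShiftCoeff_single (by simp), Fin.coeSucc_eq_succ]

lemma det_cyclicDiagonal_ne_zero [IsDomain R] (hσ : Function.Injective σ) {z : R} (hz : z ≠ 0) :
    (cyclicDiagonal n σ z).det ≠ 0 := by
  rw [cyclicDiagonal, det_diagonal, Finset.prod_ne_zero_iff]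
  intro i _ h
  exact hz (hσ.iterate i (h.trans (iterate_map_zero σ i).symm))

end CyclicMatrix

section PrimeParameter

open Matrix

variable {n : ℕ} [NeZero n] {R : Type*} [CommRing R] {σ : R ≃+* R} {γ : R}

lemma dvd_apply_zero_of_dvd_det_cyclicMatrix (hγ : Prime γ) (hσγ : σ γ = γ) {a : Fin n → R}
    (h : γ ∣ (cyclicMatrix σ γ a).det) : γ ∣ a 0 := by
  let π := Ideal.Quotient.mk (Ideal.span {γ})
  have hπ (r : R) : π r = 0 ↔ γ ∣ r := Ideal.Quotient.eq_zero_iff_dvd γ r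
  have lowerTriangular : (π.mapMatrix (cyclicMatrix σ γ a)).IsLowerTriangular := by
    intro i j hij
    simp [cyclicMatrix, not_le.2 (show i < j from hij), (hπ γ).2 dvd_rfl]
  have dvd_prod : γ ∣ ∏ i : Fin n, σ^[i] (a 0) := by
    rw [← hπ, RingHom.map_det, det_of_isLowerTriangular _ lowerTriangular] at h
    rw [← hπ, map_prod]
    simpa [cyclicMatrix] using h
  obtain ⟨i, -, hi⟩ := hγ.exists_mem_finset_dvd dvd_prod
  rw [← Function.iterate_fixed hσγ i] at hi
  rwa [← RingAut.coe_pow, map_dvd_iff] at hi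

variable [IsDomain R]

lemma dvd_apply_of_det_cyclicMatrix_eq_zero (hγ : Prime γ) (hσγ : σ γ = γ) {a : Fin n → R}
    (ha : (cyclicMatrix σ γ a).det = 0) (i : Fin n) : γ ∣ a i := by
  obtain ⟨m, rfl⟩ := Nat.exists_eq_succ_of_ne_zero (NeZero.ne n)
  induction i using Fin.induction generalizing a with
  | zero => exact dvd_apply_zero_of_dvd_det_cyclicMatrix hγ hσγ (ha ▸ dvd_zero γ)
  | succ i ih =>
    obtain ⟨c, hc⟩ := dvd_apply_zero_of_dvd_det_cyclicMatrix hγ hσγ (ha ▸ dvd_zero γ)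
    let b : Fin (m + 1) → R := fun k => if k = -1 then c else a (k + 1)
    have shift_b : cyclicShiftCoeff γ b = a := by
      ext k
      rcases eq_or_ne k 0 with rfl | hk <;> simp [cyclicShiftCoeff, b, *, sub_eq_iff_eq_add]
    have det_b : (cyclicMatrix σ γ b).det = 0 := by
      rw [← shift_b, ← cyclicShift_mul_cyclicMatrix hσγ, det_mul] at ha
      exact (mul_eq_zero.1 ha).resolve_left (det_cyclicShift_ne_zero hγ.ne_zero)
    have apply_succ : a i.succ = b i.castSucc := by
      rw [← shift_b, ← Fin.coeSucc_eq_succ, cyclicShiftCoeff, if_neg (by simp), one_mul,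
        add_sub_cancel_right]
    exact apply_succ ▸ ih det_b

lemma pow_dvd_apply_of_det_cyclicMatrix_eq_zero (hγ : Prime γ) (hσγ : σ γ = γ) {a : Fin n → R}
    (ha : (cyclicMatrix σ γ a).det = 0) (i : Fin n) (k : ℕ) : γ ^ k ∣ a i := by
  induction k generalizing a with
  | zero => simp
  | succ k ih =>
    choose b hb using fun i => dvd_apply_of_det_cyclicMatrix_eq_zero hγ hσγ ha i
    have a_eq : a = fun i => b i * γ := funext fun i => (hb i).trans (mul_comm _ _)
    have det_b : (cyclicMatrix σ γ b).det = 0 := by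
      rw [a_eq, ← cyclicMatrix_mul_cyclicDiagonal, det_mul] at ha
      exact (mul_eq_zero.1 ha).resolve_right (det_cyclicDiagonal_ne_zero σ.injective hγ.ne_zero)
    rw [a_eq, pow_succ]
    exact mul_dvd_mul_right (ih det_b) γ

variable [WfDvdMonoid R]

theorem det_cyclicMatrix_ne_zero (hγ : Prime γ) (hσγ : σ γ = γ) {a : Fin n → R} (ha : a ≠ 0) :
    (cyclicMatrix σ γ a).det ≠ 0 := by
  intro hdet
  obtain ⟨i, hi⟩ := Function.ne_iff.1 ha
  obtain ⟨k, hk⟩ := FiniteMultiplicity.of_prime_left hγ hi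
  exact hk (pow_dvd_apply_of_det_cyclicMatrix_eq_zero hγ hσγ hdet i (k + 1))

theorem det_cyclicMatrix_ne_zero_of_isFractionRing {L : Type*} [Field L] [Algebra R L]
    [IsFractionRing R L] {τ : L ≃+* L} (hγ : Prime γ) (hσγ : σ γ = γ)
    (hτ : ∀ r, τ (algebraMap R L r) = algebraMap R L (σ r)) {a : Fin n → L} (ha : a ≠ 0) :
    (cyclicMatrix τ (algebraMap R L γ) a).det ≠ 0 := by
  obtain ⟨d, hd⟩ := IsLocalization.exist_integer_multiples_of_finite (nonZeroDivisors R) a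
  choose b hb using hd
  have map_b : (algebraMap R L).mapMatrix (cyclicMatrix σ γ b) =
      cyclicMatrix τ (algebraMap R L γ) a * cyclicDiagonal n τ (algebraMap R L d) := by
    have map_iterate (k : ℕ) (r : R) : algebraMap R L (σ^[k] r) = τ^[k] (algebraMap R L r) :=
      (Function.Semiconj.iterate_right (fun r => (hτ r).symm) k) r
    rw [cyclicMatrix_mul_cyclicDiagonal]
    ext i j
    simp [cyclicMatrix, map_iterate, hb, Algebra.smul_def, mul_comm, apply_ite (algebraMap R L)]
  have b_ne_zero : b ≠ 0 := by
    rintro rfl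
    refine ha (funext fun i => ?_)
    simpa using (hb i).symm
  have det_b : algebraMap R L (cyclicMatrix σ γ b).det ≠ 0 := by
    simpa using det_cyclicMatrix_ne_zero hγ hσγ b_ne_zero
  rw [RingHom.map_det, map_b, det_mul] at det_b
  exact left_ne_zero_of_mul det_b

end PrimeParameter

section CyclicAlgebra

open Matrix

variable {K L : Type*} [Field K] [Field L] [Algebra K L] {n : ℕ} {τ : L ≃ₐ[K] L} {γ : L}

/-- `cyclicMatrix` as a `K`-linear map of the coefficients. -/
def cyclicMatrixLinearMap (n : ℕ) (τ : L ≃ₐ[K] L) (γ : L) :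
    (Fin n → L) →ₗ[K] Matrix (Fin n) (Fin n) L where
  toFun := cyclicMatrix τ γ
  map_add' a b := by
    ext i j
    simp [cyclicMatrix, iterate_map_add, mul_add]
  map_smul' c a := by
    ext i j
    simp [cyclicMatrix, ← AlgEquiv.coe_pow]

lemma cyclicMatrixLinearMap_apply (a : Fin n → L) :
    cyclicMatrixLinearMap n τ γ a = cyclicMatrix τ γ a := rfl

variable [NeZero n]

lemma cyclicMatrixLinearMap_injective :
    Function.Injective (cyclicMatrixLinearMap n τ γ) := by
  intro a b h
  ext i
  simpa [cyclicMatrixLinearMap_apply, cyclicMatrix] using congr_fun₂ h i 0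

/-- The cyclic algebra `⨁ i < n, uⁱ L` with `uⁿ = γ` and `z u = u τ(z)`, realised as the subalgebra
of `Mₙ(L)` generated by `cyclicShift n γ` and the matrices `cyclicDiagonal n τ z`. -/
abbrev cyclicAlgebra (n : ℕ) [NeZero n] (τ : L ≃ₐ[K] L) (γ : L) :
    Subalgebra K (Matrix (Fin n) (Fin n) L) :=
  Algebra.adjoin K ({cyclicShift n γ} ∪ Set.range (cyclicDiagonal n τ))

lemma mul_mem_range_cyclicMatrixLinearMap (hτ : τ^[n] = id) (hτγ : τ γ = γ)
    {x y : Matrix (Fin n) (Fin n) L} (hx : x ∈ cyclicAlgebra n τ γ)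
    (hy : y ∈ (cyclicMatrixLinearMap n τ γ).range) :
    x * y ∈ (cyclicMatrixLinearMap n τ γ).range := by
  induction hx using Algebra.adjoin_induction generalizing y with
  | mem x hx =>
    obtain ⟨a, rfl⟩ := hy
    obtain rfl | ⟨z, rfl⟩ := hx
    · exact ⟨_, (cyclicShift_mul_cyclicMatrix hτγ a).symm⟩
    · exact ⟨fun i => τ^[i] z * a i, (cyclicDiagonal_mul_cyclicMatrix hτ z a).symm⟩
  | algebraMap c => simpa [← Algebra.smul_def] using Submodule.smul_mem _ c hy
  | add x x' _ _ ihx ihx' => simpa [add_mul] using add_mem (ihx hy) (ihx' hy)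
  | mul x x' _ _ ihx ihx' => simpa [mul_assoc] using ihx (ihx' hy)

lemma toSubmodule_cyclicAlgebra (hτ : τ^[n] = id) (hτγ : τ γ = γ) :
    (cyclicAlgebra n τ γ).toSubmodule = (cyclicMatrixLinearMap n τ γ).range := by
  apply le_antisymm
  · intro x hx
    have one_mem : 1 ∈ (cyclicMatrixLinearMap n τ γ).range := by
      refine ⟨Pi.single 0 1, ?_⟩
      rw [cyclicMatrixLinearMap_apply, cyclicMatrix_single_zero]
      simp [cyclicDiagonal, iterate_map_one]
    simpa using mul_mem_range_cyclicMatrixLinearMap hτ hτγ hx one_mem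
  · rintro _ ⟨a, rfl⟩
    rw [← Finset.univ_sum_single a, map_sum]
    refine Submodule.sum_mem _ fun i _ => ?_
    rw [cyclicMatrixLinearMap_apply, ← cyclicShift_pow_mul_cyclicDiagonal hτγ]
    exact Subalgebra.mul_mem _ (pow_mem (Algebra.subset_adjoin (.inl rfl)) _)
      (Algebra.subset_adjoin (.inr ⟨_, rfl⟩))

lemma finrank_cyclicAlgebra [FiniteDimensional K L] (hτ : τ^[n] = id) (hτγ : τ γ = γ) :
    Module.finrank K (cyclicAlgebra n τ γ) = n * Module.finrank K L := by
  rw [← Subalgebra.finrank_toSubmodule, toSubmodule_cyclicAlgebra hτ hτγ,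
    LinearMap.finrank_range_of_inj cyclicMatrixLinearMap_injective]
  simp [Module.finrank_pi_fintype]

lemma isUnit_of_coe_det_ne_zero {ι : Type*} [Fintype ι] [DecidableEq ι] [FiniteDimensional K L]
    {A : Subalgebra K (Matrix ι ι L)} {x : A} (hx : (x : Matrix ι ι L).det ≠ 0) : IsUnit x := by
  have isUnit_coe : IsUnit (x : Matrix ι ι L) := (isUnit_iff_isUnit_det _).2 hx.isUnit
  have mem_nonZeroDivisors : x ∈ nonZeroDivisors A :=
    comap_nonZeroDivisors_le_of_injective (f := A.val) Subtype.val_injective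
      isUnit_coe.mem_nonZeroDivisors
  exact IsArtinianRing.isUnit_of_nonZeroDivisor_of_isIntegral' (R := K) mem_nonZeroDivisors

end CyclicAlgebra

theorem cyclic_algebra_sigma_two_division_ring_general {K L R : Type*} [Field K] [Field L]
    [Algebra K L] [FiniteDimensional K L] [CommRing R] [IsDomain R] [WfDvdMonoid R] [Algebra R L]
    [IsFractionRing R L] {n : ℕ} [NeZero n] {σ : R ≃+* R} {τ : L ≃ₐ[K] L}
    (hστ : ∀ r, τ (algebraMap R L r) = algebraMap R L (σ r)) (hτ : τ^[n] = id)
    {γ : R} (hγ : Prime γ) (hσγ : σ γ = γ) :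
    (∀ x : cyclicAlgebra n τ (algebraMap R L γ), x ≠ 0 → IsUnit x) ∧
    Module.finrank K (cyclicAlgebra n τ (algebraMap R L γ)) = n * Module.finrank K L := by
  have hτγ : τ (algebraMap R L γ) = algebraMap R L γ := by rw [hστ, hσγ]
  refine ⟨fun x hx => isUnit_of_coe_det_ne_zero ?_, finrank_cyclicAlgebra hτ hτγ⟩
  obtain ⟨a, ha⟩ : (x : Matrix (Fin n) (Fin n) L) ∈ (cyclicMatrixLinearMap n τ _).range :=
    toSubmodule_cyclicAlgebra hτ hτγ ▸ (Subalgebra.mem_toSubmodule _).2 x.2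
  rw [← ha]
  refine det_cyclicMatrix_ne_zero_of_isFractionRing (τ := τ.toRingEquiv) hγ hσγ hστ ?_
  rintro rfl
  exact hx (Subtype.ext (by rw [← ha, map_zero, ZeroMemClass.coe_zero]))

section Inert

open Polynomial

variable {R S : Type*} [CommRing R] [CommRing S] [Algebra R S]

lemma finrank_quotient_map_eq_finrank [Module.Free R S] (p : Ideal R) [Nontrivial (R ⧸ p)] :
    Module.finrank (R ⧸ p) (S ⧸ p.map (algebraMap R S)) = Module.finrank R S := by
  have : Nontrivial R := (Ideal.Quotient.mk p).domain_nontrivial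
  rw [(Algebra.TensorProduct.quotIdealMapEquivQuotTensor S p).toLinearEquiv.finrank_eq,
    Module.finrank_baseChange]

theorem isMaximal_map_of_irreducible_map [Module.Free R S] {p : Ideal R}
    [p.IsMaximal] {f : R[X]} {θ : S} (hθ : aeval θ f = 0)
    (hf : Irreducible (f.map (Ideal.Quotient.mk p)))
    (hdeg : (f.map (Ideal.Quotient.mk p)).natDegree = Module.finrank R S) :
    (p.map (algebraMap R S)).IsMaximal := by
  let := Ideal.Quotient.field p
  let f' := f.map (Ideal.Quotient.mk p)
  have : Fact (Irreducible f') := ⟨hf⟩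
  let S' := S ⧸ p.map (algebraMap R S)
  have root : aeval (Ideal.Quotient.mk (p.map (algebraMap R S)) θ) f' = 0 := by
    rw [aeval_def, eval₂_map, ← map_zero (Ideal.Quotient.mk (p.map (algebraMap R S))), ← hθ,
      aeval_def, hom_eval₂]
    rfl
  have finrank_S' : Module.finrank (R ⧸ p) S' = f'.natDegree :=
    (finrank_quotient_map_eq_finrank p).trans hdeg.symm
  have finrank_S'_pos : 0 < Module.finrank (R ⧸ p) S' := finrank_S' ▸ hf.natDegree_pos
  have : Nontrivial S' := Module.nontrivial_of_finrank_pos finrank_S'_pos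
  have : Module.Finite (R ⧸ p) S' := Module.finite_of_finrank_pos finrank_S'_pos
  have : Module.Finite (R ⧸ p) (AdjoinRoot f') := (AdjoinRoot.powerBasis hf.ne_zero).finite
  let φ : AdjoinRoot f' →ₐ[R ⧸ p] S' := AdjoinRoot.liftAlgHom f' (Algebra.ofId _ _) _ root
  have finrank_eq : Module.finrank (R ⧸ p) (AdjoinRoot f') = Module.finrank (R ⧸ p) S' := by
    rw [finrank_S', (AdjoinRoot.powerBasis hf.ne_zero).finrank, AdjoinRoot.powerBasis_dim]
  have bijective : Function.Bijective φ :=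
    ⟨φ.injective, (LinearMap.injective_iff_surjective_of_finrank_eq_finrank finrank_eq
      (f := φ.toLinearMap)).1 φ.injective⟩
  exact Ideal.Quotient.maximal_of_isField _
    ((RingEquiv.ofBijective φ bijective).symm.toMulEquiv.isField (Field.toIsField _))

end Inert

section Eta7

open NumberField Polynomial

/-- The minimal polynomial of `ζ₇ + ζ₇⁻¹`, with integer coefficients. -/
def eta7Poly : ℤ[X] := X ^ 3 + X ^ 2 - 2 * X - 1

lemma monic_eta7Poly : eta7Poly.Monic := by
  unfold eta7Poly
  monicity!

lemma natDegree_eta7Poly : eta7Poly.natDegree = 3 := by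
  unfold eta7Poly
  compute_degree!

lemma aeval_eta7Poly {A : Type*} [CommRing A] [Algebra ℤ A] (x : A) :
    aeval x eta7Poly = x ^ 3 + x ^ 2 - 2 * x - 1 := by
  simp [eta7Poly, map_ofNat (aeval x)]

lemma isPrimitiveRoot_zeta7 : IsPrimitiveRoot zeta7 7 := by
  simpa [zeta7] using Complex.isPrimitiveRoot_exp 7 (by simp)

lemma zeta7_ne_zero : zeta7 ≠ 0 := isPrimitiveRoot_zeta7.ne_zero (by simp)

lemma eta7_cubic : eta7 ^ 3 + eta7 ^ 2 - 2 * eta7 - 1 = 0 := by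
  apply Subtype.ext
  change (zeta7 + zeta7⁻¹) ^ 3 + (zeta7 + zeta7⁻¹) ^ 2 - 2 * (zeta7 + zeta7⁻¹) - 1 = 0
  have geom_sum := isPrimitiveRoot_zeta7.geom_sum_eq_zero (by simp)
  simp only [Finset.sum_range_succ, Finset.sum_range_zero] at geom_sum
  field_simp [zeta7_ne_zero]
  linear_combination geom_sum

lemma isMaximal_span_two_int : (Ideal.span {(2 : ℤ)}).IsMaximal :=
  PrincipalIdealRing.isMaximal_of_irreducible Int.prime_two.irreducible

lemma irreducible_eta7Poly_map_mod_two :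
    Irreducible (eta7Poly.map (Ideal.Quotient.mk (Ideal.span {(2 : ℤ)}))) := by
  have := isMaximal_span_two_int
  let := Ideal.Quotient.field (Ideal.span {(2 : ℤ)})
  have natDegree_eq : (eta7Poly.map (Ideal.Quotient.mk (Ideal.span {(2 : ℤ)}))).natDegree = 3 := by
    rw [monic_eta7Poly.natDegree_map, natDegree_eta7Poly]
  refine irreducible_of_degree_le_three_of_not_isRoot (by simp [natDegree_eq]) fun x hx => ?_
  obtain ⟨k, rfl⟩ := Ideal.Quotient.mk_surjective x
  rw [IsRoot.def, eval_map_apply, Ideal.Quotient.eq_zero_iff_dvd, ← even_iff_two_dvd] at hx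
  have odd_eval : Odd (eval k eta7Poly) := by
    have eval_eq : eval k eta7Poly = k * (k * (k + 1)) - (2 * k + 1) := by
      simp only [eta7Poly, eval_sub, eval_add, eval_pow, eval_X, eval_mul, eval_ofNat, eval_one]
      ring
    rw [eval_eq]
    exact ((Int.even_mul_succ_self k).mul_left k).sub_odd (odd_two_mul_add_one k)
  exact Int.not_even_iff_odd.2 odd_eval hx

lemma irreducible_eta7Poly : Irreducible eta7Poly :=
  have := isMaximal_span_two_int.isPrime
  monic_eta7Poly.irreducible_of_irreducible_map _ _ irreducible_eta7Poly_map_mod_two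

lemma minpoly_eta7 : minpoly ℚ (eta7 : ℂ) = eta7Poly.map (algebraMap ℤ ℚ) := by
  refine (minpoly.eq_of_irreducible_of_monic ?_ ?_ (monic_eta7Poly.map _)).symm
  · exact monic_eta7Poly.irreducible_iff_irreducible_map_fraction_map.1 irreducible_eta7Poly
  · rw [aeval_map_algebraMap, aeval_eta7Poly]
    exact congr_arg (algebraMap L7 ℂ) eta7_cubic

lemma finrank_L7 : Module.finrank ℚ L7 = 3 := by
  have integral : IsIntegral ℚ (eta7 : ℂ) :=
    minpoly.ne_zero_iff.1 (minpoly_eta7 ▸ (monic_eta7Poly.map _).ne_zero)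
  calc Module.finrank ℚ L7 = (minpoly ℚ (eta7 : ℂ)).natDegree :=
        IntermediateField.adjoin.finrank integral
    _ = 3 := by rw [minpoly_eta7, monic_eta7Poly.natDegree_map, natDegree_eta7Poly]

instance : NumberField L7 where
  to_finiteDimensional := Module.finite_of_finrank_pos (by simp [finrank_L7])

lemma prime_two_ringOfIntegers_L7 : Prime (2 : 𝓞 L7) := by
  have := isMaximal_span_two_int
  have isIntegral_eta7 : IsIntegral ℤ eta7 :=
    ⟨eta7Poly, monic_eta7Poly, (aeval_eta7Poly eta7).trans eta7_cubic⟩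
  let θ : 𝓞 L7 := ⟨eta7, isIntegral_eta7⟩
  have root : aeval θ eta7Poly = 0 :=
    (aeval_eta7Poly θ).trans (RingOfIntegers.ext eta7_cubic)
  have isMaximal := isMaximal_map_of_irreducible_map root irreducible_eta7Poly_map_mod_two
    (by rw [monic_eta7Poly.natDegree_map, natDegree_eta7Poly, RingOfIntegers.rank, finrank_L7])
  rw [Ideal.map_span, Set.image_singleton, map_ofNat] at isMaximal
  exact (Ideal.span_singleton_prime two_ne_zero).1 isMaximal.isPrime

variable {S : L7 ≃ₐ[ℚ] L7}

lemma apply_eta7_eq (hS : ((S eta7 : L7) : ℂ) = zeta7 ^ 2 + (zeta7 ^ 2)⁻¹) :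
    S eta7 = eta7 ^ 2 - 2 := by
  refine Subtype.ext (hS.trans ?_)
  change _ = (zeta7 + zeta7⁻¹) ^ 2 - 2
  field_simp [zeta7_ne_zero]
  ring

lemma iterate_three_eq_id_of_apply_eta7 (hS : S eta7 = eta7 ^ 2 - 2) : S^[3] = id := by
  have pow_three_apply : (S ^ 3) eta7 = eta7 := by
    simp only [AlgEquiv.coe_pow, Function.iterate_succ_apply, Function.iterate_zero_apply, hS,
      map_sub, map_pow, map_ofNat]
    linear_combination
      (eta7 ^ 5 - eta7 ^ 4 - 5 * eta7 ^ 3 + 4 * eta7 ^ 2 + 5 * eta7 - 2) * eta7_cubic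
  have pow_three : ((S ^ 3 : L7 ≃ₐ[ℚ] L7) : L7 →ₐ[ℚ] L7) = AlgHom.id ℚ L7 :=
    IntermediateField.algHom_ext_of_eq_adjoin ℚ rfl (by rintro _ rfl; exact pow_three_apply)
  rw [← AlgEquiv.coe_pow]
  exact congr_arg DFunLike.coe pow_three

end Eta7

/-- With `S` the generator of the Galois group of
`L = ℚ(ζ₇ + ζ₇⁻¹)` over `ℚ` (sending `ζ₇ + ζ₇⁻¹` to `ζ₇² + ζ₇⁻²`), `D(z) =
diag(z, S(z), S²(z))` and `U` the matrix with `U_{2,1} = U_{3,2} = 1`, `U_{1,3} = 2`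
(so `U³ = 2·I`, `D(z)U = U·D(S(z))`), the `ℚ`-subalgebra of `M₃(L)` generated by `U`
and all `D(z)` is a division ring of dimension `9` over `ℚ`. -/
theorem cyclic_algebra_sigma_two_division_ring
    (S : L7 ≃ₐ[ℚ] L7)
    (hS : ((S eta7 : L7) : ℂ) = zeta7 ^ 2 + (zeta7 ^ 2)⁻¹)
    (U : Matrix (Fin 3) (Fin 3) L7)
    (hU : ∀ i j : Fin 3, U i j =
      if (i : ℕ) = (j : ℕ) + 1 then 1
      else if (i : ℕ) = 0 ∧ (j : ℕ) = 2 then 2 else 0)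
    (D : L7 → Matrix (Fin 3) (Fin 3) L7)
    (hD : ∀ z : L7, D z = Matrix.diagonal fun i : Fin 3 => (S ^ (i : ℕ)) z) :
    (∀ x : Algebra.adjoin ℚ ({U} ∪ Set.range D), x ≠ 0 → IsUnit x) ∧
    Module.finrank ℚ (Algebra.adjoin ℚ ({U} ∪ Set.range D)) = 9 := by
  obtain rfl : U = cyclicShift 3 2 := by
    ext1 i j
    fin_cases i <;> fin_cases j <;> simp [hU, cyclicShift]
  obtain rfl : D = cyclicDiagonal 3 S := by
    ext1 z
    simp only [hD, cyclicDiagonal, AlgEquiv.coe_pow]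
  have general := cyclic_algebra_sigma_two_division_ring_general
    (σ := NumberField.RingOfIntegers.mapRingEquiv S.toRingEquiv) (fun _ => rfl)
    (iterate_three_eq_id_of_apply_eta7 (apply_eta7_eq hS)) prime_two_ringOfIntegers_L7
    (map_ofNat _ 2)
  rwa [map_ofNat, finrank_L7] at general

end
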